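/- (Bernstein–Dewar–Gortler–Nixon–Sitharam–Theran) Let $n \ge 1$ and let $G$ be a simple graph on vertex set $\{1,\dots,n\}$ with edge set $E(G)$. Let $\mathcal{M}_G$ be the set of real symmetric positive definite $n\times n$ matrices $K$ with $K_{ij} = 0$ whenever $i \ne j$ and $ij \notin E(G)$, and let the maximum likelihood threshold $\mathrm{MLT}(G)$ be the smallest positive integer $d$ such that for Lebesgue-almost every real $n\times d$ matrix $X$, the function $K \mapsto \operatorname{tr}(XX^{T}K) - \log\det K$ attains a minimum on $\mathcal{M}_G$. Then $\mathrm{MLT}(G)$ equals the minimum positive integer $d$ such that for Lebesgue-almost every $p : \{1,\dots,n\} \to \mathbb{R}^{d-1}$, there exists $q : \{1,\dots,n\} \to \mathbb{R}^{n-1}$ with $\|q(i) - q(j)\| = \|p(i) - p(j)\|$ (Euclidean norms) for every edge $ij \in E(G)$ and such that the affine span of $\{q(1), \dots, q(n)\}$ is all of $\mathbb{R}^{n-1}$. (Both minima exist.) -/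

import Mathlib

open MeasureTheory Matrix

noncomputable section

/-- The objective function `K ↦ tr(S K) − log det K` of Gaussian maximum likelihood. -/
def mlObjective {n : ℕ} (S K : Matrix (Fin n) (Fin n) ℝ) : ℝ :=
  (S * K).trace - Real.log K.det

/-- The maximum likelihood threshold of a set `M` of positive definite matrices:
the smallest positive integer `d` such that for Lebesgue-almost every real `n × d`
matrix `X`, the function `K ↦ tr(X Xᵀ K) − log det K` attains a minimum on `M`. -/
def mlt (n : ℕ) (M : Set (Matrix (Fin n) (Fin n) ℝ)) : ℕ :=
  sInf {d : ℕ | 0 < d ∧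
    ∀ᵐ X : Fin n → Fin d → ℝ ∂volume,
      ∃ K ∈ M, ∀ K' ∈ M,
        mlObjective (Matrix.of X * (Matrix.of X)ᵀ) K ≤
          mlObjective (Matrix.of X * (Matrix.of X)ᵀ) K'}

/-- The Gaussian graphical model of a graph `G` on `n` vertices: all symmetric positive
definite matrices whose off-diagonal entries vanish at non-edges of `G`. -/
def graphModel (n : ℕ) (G : SimpleGraph (Fin n)) : Set (Matrix (Fin n) (Fin n) ℝ) :=
  {K | K.PosDef ∧ ∀ i j, i ≠ j → ¬ G.Adj i j → K i j = 0}

end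

/-!
Both sides of the theorem say that almost every configuration of vectors in `ℝ^d` is stress-free:
no nonzero positive semidefinite matrix supported on `G` is orthogonal to its Gram matrix `S`.

* On the compact set of positive semidefinite matrices of trace one supported on `G`, the function
  `K ↦ tr(S K)` is then bounded below by some `c > 0`, so it dominates `log det K ≤ n log tr K` and
  sublevel sets of the objective are compact. Conversely, at a minimizer `K` the objective is
  stationary along `G`, so `tr(S E) = tr(K⁻¹ E)`, which is positive when `E ≠ 0` is positive
  semidefinite and supported on `G`.
* For `S` the Gram matrix of the homogeneous coordinates `(1, p i)`, stationarity says that `K⁻¹`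
  and `S` agree on the diagonal and on the edges. Since `K⁻¹` is the Gram matrix of linearly
  independent vectors, these form an equivalent framework with affinely independent points, which
  an isometry moves into `ℝ^(n-1)`. Conversely, a matrix with zero row sums has the same energy
  on equivalent frameworks, and a positive semidefinite one of zero energy on affinely independent
  points vanishes.
* Stress-freeness is unchanged when each vector is rescaled by a nonzero factor, so almost every
  configuration in `ℝ × ℝ^(d-1)` is stress-free iff almost every one of the form `(1, p i)` is.
-/

open Filter Topology

section Gram

variable {ι κ V : Type*} [Fintype ι] [NormedAddCommGroup V] [InnerProductSpace ℝ V]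

theorem exists_eq_conjTranspose_mul_self_of_posSemidef {K : Matrix ι ι ℝ} (hK : K.PosSemidef) :
    ∃ B : Matrix ι ι ℝ, K = Bᴴ * B := by
  classical
  open scoped MatrixOrder in exact CStarAlgebra.nonneg_iff_eq_star_mul_self.1 hK.nonneg

theorem exists_gram_eq_of_posSemidef {C : Matrix ι ι ℝ} (hC : C.PosSemidef) :
    ∃ v : ι → EuclideanSpace ℝ ι, gram ℝ v = C := by
  obtain ⟨B, rfl⟩ := exists_eq_conjTranspose_mul_self_of_posSemidef hC
  exact ⟨fun i => WithLp.toLp 2 (B.col i),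
    gram_eq_conjTranspose_mul (EuclideanSpace.basisFun ι ℝ) _⟩

theorem mul_gram_mul_conjTranspose (B : Matrix κ ι ℝ) (x : ι → V) :
    B * gram ℝ x * Bᴴ = gram ℝ fun a => ∑ i, B a i • x i := by
  ext a b
  rw [gram_apply, ← star_dotProduct_gram_mulVec, Matrix.mul_assoc]
  simp [Matrix.mul_apply, dotProduct, mulVec]

theorem trace_gram_mul_conjTranspose_mul_self [Fintype κ] (x : ι → V) (B : Matrix κ ι ℝ) :
    (gram ℝ x * (Bᴴ * B)).trace = ∑ a, ‖∑ i, B a i • x i‖ ^ 2 := by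
  rw [← Matrix.mul_assoc, trace_mul_comm, ← Matrix.mul_assoc, mul_gram_mul_conjTranspose]
  exact Finset.sum_congr rfl fun a _ => real_inner_self_eq_norm_sq _

theorem trace_gram_mul_nonneg {K : Matrix ι ι ℝ} (hK : K.PosSemidef) (x : ι → V) :
    0 ≤ (gram ℝ x * K).trace := by
  obtain ⟨B, rfl⟩ := exists_eq_conjTranspose_mul_self_of_posSemidef hK
  rw [trace_gram_mul_conjTranspose_mul_self]
  positivity

theorem trace_gram_mul (x : ι → V) (K : Matrix ι ι ℝ) :
    (gram ℝ x * K).trace = ∑ i, ∑ j, K i j * inner ℝ (x i) (x j) := by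
  rw [trace_mul_comm]
  simp only [trace, diag_apply, Matrix.mul_apply, gram_apply, real_inner_comm]

theorem trace_gram_mul_eq_zero_iff {K : Matrix ι ι ℝ} (hK : K.PosSemidef) {x : ι → V} :
    (gram ℝ x * K).trace = 0 ↔ ∀ i, ∑ j, K i j • x j = 0 := by
  refine ⟨fun h i => ?_, fun h => ?_⟩
  · obtain ⟨B, rfl⟩ := exists_eq_conjTranspose_mul_self_of_posSemidef hK
    rw [trace_gram_mul_conjTranspose_mul_self,
      Finset.sum_eq_zero_iff_of_nonneg fun _ _ => by positivity] at h
    have hB (a) : ∑ j, B a j • x j = 0 := by simpa using h a (Finset.mem_univ a)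
    simp only [Matrix.mul_apply, Finset.sum_smul, mul_smul]
    rw [Finset.sum_comm]
    simp [← Finset.smul_sum, hB]
  · simp_rw [trace_gram_mul, ← real_inner_smul_right, ← inner_sum, h, inner_zero_right,
      Finset.sum_const_zero]

theorem eq_zero_of_forall_sum_smul_eq_zero {M : Type*} [AddCommGroup M] [Module ℝ M]
    {x : ι → M} (hx : LinearIndependent ℝ x) {K : Matrix κ ι ℝ}
    (hK : ∀ i, ∑ j, K i j • x j = 0) : K = 0 :=
  Matrix.ext fun i => Fintype.linearIndependent_iff.1 hx (K i) (hK i)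

theorem trace_mul_pos_of_posDef {C K : Matrix ι ι ℝ} (hC : C.PosDef) (hK : K.PosSemidef)
    (hK0 : K ≠ 0) : 0 < (C * K).trace := by
  obtain ⟨v, rfl⟩ := exists_gram_eq_of_posSemidef hC.posSemidef
  refine (trace_gram_mul_nonneg hK v).lt_of_ne' fun h => hK0 ?_
  exact eq_zero_of_forall_sum_smul_eq_zero (linearIndependent_of_posDef_gram hC)
    ((trace_gram_mul_eq_zero_iff hK).1 h)

end Gram

section PosSemidef

variable {ι : Type*}

theorem eventually_posDef_of_isHermitian [Finite ι] {K : Matrix ι ι ℝ} (hK : K.PosDef) :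
    ∀ᶠ A in 𝓝 K, A.IsHermitian → A.PosDef := by
  cases nonempty_fintype ι
  have hpos : ∀ᶠ A in 𝓝 K, ∀ x ∈ Metric.sphere (0 : ι → ℝ) 1, 0 < x ⬝ᵥ A *ᵥ x := by
    refine (isCompact_sphere _ _).eventually_forall_of_forall_eventually fun x hx => ?_
    have hcont : Continuous fun z : Matrix ι ι ℝ × (ι → ℝ) => z.2 ⬝ᵥ z.1 *ᵥ z.2 := by fun_prop
    refine (hcont.tendsto (K, x)).eventually (lt_mem_nhds ?_)
    exact hK.dotProduct_mulVec_pos (by rintro rfl; simp at hx)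
  filter_upwards [hpos] with A hA hAh
  refine .of_dotProduct_mulVec_pos hAh fun x hx => ?_
  have hx0 : 0 < ‖x‖ := norm_pos_iff.2 hx
  have h := hA (‖x‖⁻¹ • x) (by simp [norm_smul, hx0.ne'])
  simpa [mulVec_smul, hx0] using h

theorem isClosed_setOf_posSemidef [Finite ι] : IsClosed {K : Matrix ι ι ℝ | K.PosSemidef} := by
  cases nonempty_fintype ι
  simp only [posSemidef_iff_dotProduct_mulVec, IsHermitian, Set.ofPred_and, Set.ofPred_forall]
  exact (isClosed_eq (by fun_prop) continuous_id).inter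
    (isClosed_iInter fun x => isClosed_le (by fun_prop) (by fun_prop))

variable [Fintype ι]

theorem abs_apply_le_trace_of_posSemidef {K : Matrix ι ι ℝ} (hK : K.PosSemidef) (i j : ι) :
    |K i j| ≤ K.trace := by
  obtain ⟨v, rfl⟩ := exists_gram_eq_of_posSemidef hK
  have hdiag (k : ι) : ‖v k‖ ^ 2 ≤ (gram ℝ v).trace := by
    simp only [trace, diag_apply, gram_apply, real_inner_self_eq_norm_sq]
    exact Finset.single_le_sum (f := fun k => ‖v k‖ ^ 2) (fun _ _ => by positivity)
      (Finset.mem_univ k)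
  rw [gram_apply]
  nlinarith [abs_real_inner_le_norm (v i) (v j), hdiag i, hdiag j, sq_nonneg (‖v i‖ - ‖v j‖)]

theorem isCompact_setOf_posSemidef_trace_le (T : ℝ) :
    IsCompact {K : Matrix ι ι ℝ | K.PosSemidef ∧ K.trace ≤ T} := by
  have hbox : IsCompact (Set.univ.pi fun _ : ι => Set.univ.pi fun _ : ι => Set.Icc (-T) T) :=
    isCompact_univ_pi fun _ => isCompact_univ_pi fun _ => isCompact_Icc
  have hclosed : IsClosed {K : Matrix ι ι ℝ | K.trace ≤ T} :=
    isClosed_le (by fun_prop) continuous_const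
  exact hbox.of_isClosed_subset (isClosed_setOf_posSemidef.inter hclosed) fun K hK i _ j _ =>
    abs_le.1 ((abs_apply_le_trace_of_posSemidef hK.1 i j).trans hK.2)

theorem det_le_trace_pow_card_of_posSemidef [DecidableEq ι] {K : Matrix ι ι ℝ}
    (hK : K.PosSemidef) : K.det ≤ K.trace ^ Fintype.card ι := by
  rw [hK.1.det_eq_prod_eigenvalues, hK.1.trace_eq_sum_eigenvalues]
  simp only [RCLike.ofReal_real_eq_id, id_eq]
  calc ∏ i, hK.1.eigenvalues i ≤ ∏ _i : ι, ∑ j, hK.1.eigenvalues j :=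
        Finset.prod_le_prod (fun i _ => hK.eigenvalues_nonneg i) fun i _ =>
          Finset.single_le_sum (fun j _ => hK.eigenvalues_nonneg j) (Finset.mem_univ i)
    _ = _ := by rw [Finset.prod_const, Finset.card_univ]

theorem log_det_le_card_mul_log_trace_of_posDef [DecidableEq ι] {K : Matrix ι ι ℝ}
    (hK : K.PosDef) : Real.log K.det ≤ Fintype.card ι * Real.log K.trace := by
  rw [← Real.log_pow]
  exact Real.log_le_log hK.det_pos (det_le_trace_pow_card_of_posSemidef hK.posSemidef)

theorem hasDerivAt_det_one_add_smul [DecidableEq ι] (A : Matrix ι ι ℝ) :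
    HasDerivAt (fun t : ℝ => (1 + t • A).det) A.trace 0 := by
  have h := (det (1 + (Polynomial.X : Polynomial ℝ) • A.map Polynomial.C)).hasDerivAt 0
  rw [derivative_det_one_add_X_smul] at h
  simpa [eval_det, ← smul_eq_mul_diagonal] using h

theorem hasDerivAt_log_det_add_smul [DecidableEq ι] {K : Matrix ι ι ℝ} (hK : K.det ≠ 0)
    (E : Matrix ι ι ℝ) :
    HasDerivAt (fun t : ℝ => Real.log (K + t • E).det) (K⁻¹ * E).trace 0 := by
  have hfactor (t : ℝ) : (K + t • E).det = K.det * (1 + t • (K⁻¹ * E)).det := by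
    rw [← det_mul, mul_add, mul_one, mul_smul_comm, mul_nonsing_inv_cancel_left _ _ hK.isUnit]
  simp_rw [hfactor]
  have h := ((hasDerivAt_det_one_add_smul (K⁻¹ * E)).const_mul K.det).log (by simpa using hK)
  simpa [hK] using h

end PosSemidef

theorem tendsto_mul_sub_mul_log_atTop {c : ℝ} (hc : 0 < c) (a : ℝ) :
    Tendsto (fun t => c * t - a * Real.log t) atTop atTop := by
  have hlog : (fun t => a * Real.log t) =o[atTop] fun t => c * t :=
    (Real.isLittleO_log_id_atTop.const_mul_left a).trans_isBigO
      (Asymptotics.isBigO_self_const_mul hc.ne' _ _)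
  exact (Asymptotics.IsEquivalent.refl.sub_isLittleO hlog).symm.tendsto_atTop
    (tendsto_id.const_mul_atTop hc)

section Likelihood

/-- The positive definite matrices in a linear space `L` of matrices: a linear concentration
model. For the matrices supported on a graph it is the Gaussian graphical model. -/
def concentrationModel {ι : Type*} (L : Submodule ℝ (Matrix ι ι ℝ)) : Set (Matrix ι ι ℝ) :=
  {K | K.PosDef ∧ K ∈ L}

theorem exists_mul_trace_le_trace_mul {ι : Type*} [Fintype ι] {L : Submodule ℝ (Matrix ι ι ℝ)}
    {S : Matrix ι ι ℝ} (hS : ∀ K ∈ L, K.PosSemidef → K ≠ 0 → 0 < (S * K).trace) :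
    ∃ c : ℝ, 0 < c ∧ ∀ K ∈ L, K.PosSemidef → c * K.trace ≤ (S * K).trace := by
  have hcompact : IsCompact ({K : Matrix ι ι ℝ | K.PosSemidef ∧ K.trace ≤ 1} ∩
      (L ∩ {K | K.trace = 1})) :=
    (isCompact_setOf_posSemidef_trace_le 1).inter_right
      (L.closed_of_finiteDimensional.inter (isClosed_eq (by fun_prop) continuous_const))
  obtain ⟨c, hc, hmin⟩ := hcompact.exists_forall_le' (f := fun K => (S * K).trace) (a := 0)
    (by fun_prop) (by
      rintro K ⟨⟨hK, -⟩, hKL, htrace⟩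
      exact hS K hKL hK fun h => by simp [h] at htrace)
  refine ⟨c, hc, fun K hKL hK => ?_⟩
  rcases hK.trace_nonneg.eq_or_lt with hzero | hpos
  · obtain rfl : K = 0 := hK.trace_eq_zero_iff.1 hzero.symm
    simp
  · have htrace : (K.trace⁻¹ • K).trace = 1 := by simp [hpos.ne']
    have h := hmin (K.trace⁻¹ • K)
      ⟨⟨hK.smul (inv_nonneg.2 hpos.le), htrace.le⟩, L.smul_mem _ hKL, htrace⟩
    rwa [mul_smul_comm, trace_smul, smul_eq_mul, inv_mul_eq_div, le_div_iff₀ hpos] at h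

variable {n : ℕ} {L : Submodule ℝ (Matrix (Fin n) (Fin n) ℝ)} {S : Matrix (Fin n) (Fin n) ℝ}

theorem exists_isCompact_mem_of_mlObjective_le
    (hS : ∀ K ∈ L, K.PosSemidef → K ≠ 0 → 0 < (S * K).trace) (m : ℝ) :
    ∃ D ⊆ concentrationModel L, IsCompact D ∧
      ∀ K ∈ concentrationModel L, mlObjective S K ≤ m → K ∈ D := by
  obtain ⟨c, hc, hdom⟩ := exists_mul_trace_le_trace_mul hS
  obtain ⟨T, hT⟩ :=
    ((tendsto_mul_sub_mul_log_atTop hc n).eventually_gt_atTop m).exists_forall_of_atTop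
  refine ⟨{K | K.PosSemidef ∧ K.trace ≤ T} ∩ (L ∩ {K | Real.exp (-m) ≤ K.det}), ?_, ?_, ?_⟩
  · rintro K ⟨⟨hK, -⟩, hKL, hdet⟩
    exact ⟨hK.posDef_iff_det_ne_zero.2 ((Real.exp_pos _).trans_le hdet).ne', hKL⟩
  · exact (isCompact_setOf_posSemidef_trace_le T).inter_right
      (L.closed_of_finiteDimensional.inter (isClosed_le continuous_const (by fun_prop)))
  · intro K ⟨hK, hKL⟩ hle
    have hlow := hdom K hKL hK.posSemidef
    rw [mlObjective] at hle
    refine ⟨⟨hK.posSemidef, le_of_not_gt fun hgt => ?_⟩, hKL, ?_⟩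
    · have hlog := log_det_le_card_mul_log_trace_of_posDef hK
      rw [Fintype.card_fin] at hlog
      linarith [hT K.trace hgt.le]
    · rw [Set.mem_ofPred_eq, ← Real.le_log_iff_exp_le hK.det_pos]
      linarith [mul_nonneg hc.le hK.posSemidef.trace_nonneg]

theorem exists_isMinOn_mlObjective (hL : (concentrationModel L).Nonempty)
    (hS : ∀ K ∈ L, K.PosSemidef → K ≠ 0 → 0 < (S * K).trace) :
    ∃ K ∈ concentrationModel L, IsMinOn (mlObjective S) (concentrationModel L) K := by
  obtain ⟨K₀, hK₀⟩ := hL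
  obtain ⟨D, hDL, hD, hsub⟩ := exists_isCompact_mem_of_mlObjective_le hS (mlObjective S K₀)
  have hcont : ContinuousOn (mlObjective S) D :=
    ContinuousOn.sub (by fun_prop)
      (ContinuousOn.log (by fun_prop) fun K hK => (hDL hK).1.det_pos.ne')
  have hK₀D := hsub K₀ hK₀ le_rfl
  obtain ⟨K, hKD, hmin⟩ := hD.exists_isMinOn ⟨K₀, hK₀D⟩ hcont
  refine ⟨K, hDL hKD, fun K' hK' => ?_⟩
  rcases le_total (mlObjective S K') (mlObjective S K₀) with hle | hge
  · exact hmin (hsub K' hK' hle)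
  · exact (hmin hK₀D).trans hge

theorem trace_mul_eq_trace_inv_mul_of_isMinOn {K E : Matrix (Fin n) (Fin n) ℝ}
    (hK : K ∈ concentrationModel L) (hmin : IsMinOn (mlObjective S) (concentrationModel L) K)
    (hEL : E ∈ L) (hE : E.IsHermitian) : (S * E).trace = (K⁻¹ * E).trace := by
  have hderiv : HasDerivAt (fun t : ℝ => mlObjective S (K + t • E))
      ((S * E).trace - (K⁻¹ * E).trace) 0 := by
    refine HasDerivAt.sub ?_ (hasDerivAt_log_det_add_smul hK.1.det_pos.ne' E)
    simpa [mul_add, trace_add] using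
      ((hasDerivAt_id (0 : ℝ)).mul_const (S * E).trace).const_add (S * K).trace
  have hline : Tendsto (fun t : ℝ => K + t • E) (𝓝 0) (𝓝 K) :=
    (by fun_prop : Continuous fun t : ℝ => K + t • E).tendsto' 0 K (by simp)
  have hloc : IsLocalMin (fun t : ℝ => mlObjective S (K + t • E)) 0 := by
    filter_upwards [hline.eventually (eventually_posDef_of_isHermitian hK.1)] with t ht
    simpa using hmin ⟨ht (hK.1.1.add (hE.smul (.all t))), L.add_mem hK.2 (L.smul_mem t hEL)⟩
  exact sub_eq_zero.1 (hloc.hasDerivAt_eq_zero hderiv)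

theorem exists_isMinOn_mlObjective_iff (hL : (concentrationModel L).Nonempty) :
    (∃ K ∈ concentrationModel L, IsMinOn (mlObjective S) (concentrationModel L) K) ↔
      ∀ K ∈ L, K.PosSemidef → K ≠ 0 → 0 < (S * K).trace := by
  refine ⟨fun ⟨K, hK, hmin⟩ E hEL hE hE0 => ?_, exists_isMinOn_mlObjective hL⟩
  rw [trace_mul_eq_trace_inv_mul_of_isMinOn hK hmin hEL hE.1]
  exact trace_mul_pos_of_posDef hK.1.inv hE hE0

end Likelihood

section Stress

variable {ι V W : Type*}

/-- The matrices supported on the diagonal and on the edges of `G`. -/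
def graphSubspace (G : SimpleGraph ι) : Submodule ℝ (Matrix ι ι ℝ) where
  carrier := {K | ∀ i j, i ≠ j → ¬ G.Adj i j → K i j = 0}
  add_mem' hK hK' i j hij hG := by simp [hK i j hij hG, hK' i j hij hG]
  zero_mem' _ _ _ _ := rfl
  smul_mem' c K hK i j hij hG := by simp [hK i j hij hG]

theorem single_add_single_mem_graphSubspace [DecidableEq ι] {G : SimpleGraph ι} {i j : ι}
    (hij : i = j ∨ G.Adj i j) (c : ℝ) : single i j c + single j i c ∈ graphSubspace G := by
  intro a b hab hG
  have h₁ : ¬ (i = a ∧ j = b) := by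
    rintro ⟨rfl, rfl⟩
    exact hij.elim hab hG
  have h₂ : ¬ (j = a ∧ i = b) := by
    rintro ⟨rfl, rfl⟩
    exact hij.elim (hab ·.symm) (hG ·.symm)
  simp [h₁, h₂]

theorem sum_sum_mul_congr_of_mem_graphSubspace [Fintype ι] {G : SimpleGraph ι}
    {K : Matrix ι ι ℝ} (hK : K ∈ graphSubspace G) {f g : ι → ι → ℝ}
    (hfg : ∀ i j, i = j ∨ G.Adj i j → f i j = g i j) :
    ∑ i, ∑ j, K i j * f i j = ∑ i, ∑ j, K i j * g i j := by
  refine Finset.sum_congr rfl fun i _ => Finset.sum_congr rfl fun j _ => ?_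
  by_cases hij : i = j ∨ G.Adj i j
  · rw [hfg i j hij]
  · rw [not_or] at hij
    rw [hK i j hij.1 hij.2, zero_mul, zero_mul]

section Module

variable [Fintype ι] [AddCommGroup V] [Module ℝ V] [AddCommGroup W] [Module ℝ W]
  {G : SimpleGraph ι} {x : ι → V}

/-- The vector configuration `x` carries no nonzero positive semidefinite stress supported on
`G`. For a point configuration `p` the relevant vectors are the homogeneous coordinates
`(1, p i)`, for which the relations `∑ j, K i j • x j = 0` are the equilibrium conditions of a
stress matrix. -/
def StressFree (G : SimpleGraph ι) (x : ι → V) : Prop :=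
  ∀ K ∈ graphSubspace G, K.PosSemidef → (∀ i, ∑ j, K i j • x j = 0) → K = 0

theorem stressFree_of_linearIndependent (hx : LinearIndependent ℝ x) : StressFree G x :=
  fun _ _ _ hKx => eq_zero_of_forall_sum_smul_eq_zero hx hKx

theorem stressFree_map_iff {f : V →ₗ[ℝ] W} (hf : Function.Injective f) :
    StressFree G (fun i => f (x i)) ↔ StressFree G x := by
  simp only [StressFree, ← map_smul, ← map_sum, map_eq_zero_iff f hf]

theorem StressFree.smul (hx : StressFree G x) {a : ι → ℝ} (ha : ∀ i, a i ≠ 0) :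
    StressFree G fun i => a i • x i := by
  classical
  intro K hKG hK hKx
  have hscaled : diagonal a * K * diagonal a = 0 := by
    refine hx _ (fun i j hij hG => by simp [hKG i j hij hG])
      (by simpa using hK.mul_mul_conjTranspose_same (diagonal a)) fun i => ?_
    simpa [mul_smul, ← Finset.smul_sum] using congrArg (a i • ·) (hKx i)
  ext i j
  simpa [ha i, ha j] using congrFun₂ hscaled i j

theorem stressFree_smul_iff {a : ι → ℝ} (ha : ∀ i, a i ≠ 0) :
    StressFree G (fun i => a i • x i) ↔ StressFree G x :=
  ⟨fun h => by simpa [smul_smul, ha] using h.smul fun i => inv_ne_zero (ha i),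
    fun h => h.smul ha⟩

end Module

theorem stressFree_iff_forall_trace_pos [Fintype ι] [NormedAddCommGroup V]
    [InnerProductSpace ℝ V] {G : SimpleGraph ι} {x : ι → V} :
    StressFree G x ↔
      ∀ K ∈ graphSubspace G, K.PosSemidef → K ≠ 0 → 0 < (gram ℝ x * K).trace := by
  refine forall₃_congr fun K _ hK => ?_
  rw [← trace_gram_mul_eq_zero_iff hK, (trace_gram_mul_nonneg hK x).lt_iff_ne', not_imp_not]

theorem concentrationModel_graphSubspace_nonempty (G : SimpleGraph ι) :
    (concentrationModel (graphSubspace G)).Nonempty := by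
  classical
  exact ⟨1, .one, fun _ _ hij _ => one_apply_ne hij⟩

end Stress

section PositiveDefiniteCompletion

variable {n : ℕ} {G : SimpleGraph (Fin n)} {V : Type*} [NormedAddCommGroup V]
  [InnerProductSpace ℝ V] {x : Fin n → V}

theorem exists_isMinOn_mlObjective_gram_iff_stressFree :
    (∃ K ∈ concentrationModel (graphSubspace G),
      IsMinOn (mlObjective (gram ℝ x)) (concentrationModel (graphSubspace G)) K) ↔
      StressFree G x := by
  rw [exists_isMinOn_mlObjective_iff (concentrationModel_graphSubspace_nonempty G),
    stressFree_iff_forall_trace_pos]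

theorem exists_min_graphModel_iff_stressFree {d : ℕ} (X : Fin n → Fin d → ℝ) :
    (∃ K ∈ graphModel n G, ∀ K' ∈ graphModel n G,
      mlObjective (of X * (of X)ᵀ) K ≤ mlObjective (of X * (of X)ᵀ) K') ↔ StressFree G X := by
  have hgram : of X * (of X)ᵀ = gram ℝ fun i => WithLp.toLp 2 (X i) := by
    ext i j
    simp [Matrix.mul_apply, PiLp.inner_apply, mul_comm]
  rw [hgram, ← stressFree_map_iff (WithLp.linearEquiv 2 ℝ (Fin d → ℝ)).symm.injective]
  exact exists_isMinOn_mlObjective_gram_iff_stressFree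

theorem StressFree.exists_linearIndependent_inner_eq (hx : StressFree G x) :
    ∃ v : Fin n → EuclideanSpace ℝ (Fin n), LinearIndependent ℝ v ∧
      ∀ i j, i = j ∨ G.Adj i j → inner ℝ (v i) (v j) = inner ℝ (x i) (x j) := by
  obtain ⟨K, hK, hmin⟩ := exists_isMinOn_mlObjective_gram_iff_stressFree.2 hx
  obtain ⟨v, hv⟩ := exists_gram_eq_of_posSemidef hK.1.inv.posSemidef
  refine ⟨v, linearIndependent_of_posDef_gram (hv ▸ hK.1.inv), fun i j hij => ?_⟩
  have hherm : (single i j (1 : ℝ) + single j i 1).IsHermitian := by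
    rw [IsHermitian, conjTranspose_add, conjTranspose_single, conjTranspose_single, star_one,
      add_comm]
  have h := trace_mul_eq_trace_inv_mul_of_isMinOn hK hmin
    (single_add_single_mem_graphSubspace hij 1) hherm
  simp only [← hv, mul_add, trace_add, trace_mul_single, gram_apply, MulOpposite.op_one,
    one_smul, real_inner_comm (v i), real_inner_comm (x i)] at h
  linarith

end PositiveDefiniteCompletion

section Framework

/-- The framework `p` on `G` is equivalent to a framework affinely spanning `E`. -/
def HasSpanningEquivalent {ι V : Type*} (E : Type*) [NormedAddCommGroup E] [NormedSpace ℝ E]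
    [NormedAddCommGroup V] (G : SimpleGraph ι) (p : ι → V) : Prop :=
  ∃ q : ι → E, (∀ i j, G.Adj i j → ‖q i - q j‖ = ‖p i - p j‖) ∧
    affineSpan ℝ (Set.range q) = ⊤

theorem affineIndependent_of_affineSpan_range_eq_top {k ι W P : Type*} [DivisionRing k]
    [AddCommGroup W] [Module k W] [AddTorsor W P] [Fintype ι]
    (hcard : Module.finrank k W + 1 = Fintype.card ι) {q : ι → P}
    (hq : affineSpan k (Set.range q) = ⊤) : AffineIndependent k q := by
  rw [affineIndependent_iff_le_finrank_vectorSpan k q hcard.symm, ← direction_affineSpan, hq,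
    AffineSubspace.direction_top, finrank_top]

variable {ι V E : Type*} [NormedAddCommGroup V] [InnerProductSpace ℝ V]
  [NormedAddCommGroup E] [InnerProductSpace ℝ E]

theorem sum_mul_norm_sub_sq_eq_neg_two_mul_trace [Fintype ι] {K : Matrix ι ι ℝ}
    (hK : K.IsHermitian) (hrow : ∀ i, ∑ j, K i j = 0) (v : ι → V) :
    ∑ i, ∑ j, K i j * ‖v i - v j‖ ^ 2 = -2 * (gram ℝ v * K).trace := by
  have hleft : ∑ i, ∑ j, K i j * ‖v i‖ ^ 2 = 0 := by simp [← Finset.sum_mul, hrow]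
  have hright : ∑ i, ∑ j, K i j * ‖v j‖ ^ 2 = 0 := by
    rw [Finset.sum_comm, ← hleft]
    exact Finset.sum_congr rfl fun i _ => Finset.sum_congr rfl fun j _ => by
      rw [← hK.apply i j, star_trivial]
  calc ∑ i, ∑ j, K i j * ‖v i - v j‖ ^ 2
      = ∑ i, ∑ j, K i j * ‖v i‖ ^ 2 + -2 * ∑ i, ∑ j, K i j * inner ℝ (v i) (v j)
        + ∑ i, ∑ j, K i j * ‖v j‖ ^ 2 := by
        simp only [Finset.mul_sum, ← Finset.sum_add_distrib, norm_sub_sq_real]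
        exact Finset.sum_congr rfl fun i _ => Finset.sum_congr rfl fun j _ => by ring
    _ = -2 * (gram ℝ v * K).trace := by rw [hleft, hright, trace_gram_mul]; ring

theorem exists_norm_sub_eq_affineSpan_eq_top [Fintype ι] [FiniteDimensional ℝ E]
    (hcard : Module.finrank ℝ E + 1 = Fintype.card ι) {v : ι → V} (hv : AffineIndependent ℝ v) :
    ∃ q : ι → E, (∀ i j, ‖q i - q j‖ = ‖v i - v j‖) ∧ affineSpan ℝ (Set.range q) = ⊤ := by
  let W := vectorSpan ℝ (Set.range v)
  have hW : Module.finrank ℝ W = Module.finrank ℝ E := hv.finrank_vectorSpan hcard.symm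
  let φ : W ≃ₗᵢ[ℝ] E := (stdOrthonormalBasis ℝ W).equiv (stdOrthonormalBasis ℝ E) (finCongr hW)
  obtain ⟨o⟩ : Nonempty ι := Fintype.card_pos_iff.1 (by omega)
  let w : ι → W := fun i =>
    ⟨v i -ᵥ v o, vsub_mem_vectorSpan ℝ (Set.mem_range_self i) (Set.mem_range_self o)⟩
  have hw : AffineIndependent ℝ w := by
    refine AffineIndependent.of_comp (W.subtype.toAffineMap + AffineMap.const ℝ W (v o)) ?_
    convert! hv using 1
    ext i
    simp [w]
  refine ⟨fun i => φ (w i), fun i j => ?_, ?_⟩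
  · rw [← map_sub, φ.norm_map, Submodule.coe_norm]
    simp [w]
  · exact (hw.map' φ.toLinearEquiv.toLinearMap.toAffineMap
      φ.injective).affineSpan_eq_top_iff_card_eq_finrank_add_one.2 hcard.symm

theorem HasSpanningEquivalent.stressFree [Fintype ι]
    (hcard : Module.finrank ℝ E + 1 = Fintype.card ι) {G : SimpleGraph ι} {p : ι → V}
    (hp : HasSpanningEquivalent E G p) : StressFree G fun i => ((1 : ℝ), p i) := by
  obtain ⟨q, hqp, hspan⟩ := hp
  intro K hKG hK hKx
  have hrow (i) : ∑ j, K i j = 0 := by simpa [Prod.fst_sum] using congrArg Prod.fst (hKx i)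
  have hKp (i) : ∑ j, K i j • p j = 0 := by simpa [Prod.snd_sum] using congrArg Prod.snd (hKx i)
  have hedge (i j) (hij : i = j ∨ G.Adj i j) : ‖q i - q j‖ ^ 2 = ‖p i - p j‖ ^ 2 := by
    rcases hij with rfl | hij
    · simp
    · rw [hqp i j hij]
  have henergy : (gram ℝ q * K).trace = 0 := by
    have h := sum_sum_mul_congr_of_mem_graphSubspace hKG hedge
    rw [sum_mul_norm_sub_sq_eq_neg_two_mul_trace hK.1 hrow,
      sum_mul_norm_sub_sq_eq_neg_two_mul_trace hK.1 hrow,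
      (trace_gram_mul_eq_zero_iff hK).2 hKp] at h
    linarith
  have hKq := (trace_gram_mul_eq_zero_iff hK).1 henergy
  have hind := affineIndependent_of_affineSpan_range_eq_top hcard hspan
  ext i j
  exact affineIndependent_iff.1 hind Finset.univ (K i) (hrow i) (hKq i) j (Finset.mem_univ j)

theorem norm_sub_eq_of_inner_eq {x y : V} {a b : E} (hx : inner ℝ a a = inner ℝ x x)
    (hy : inner ℝ b b = inner ℝ y y) (hxy : inner ℝ a b = inner ℝ x y) : ‖a - b‖ = ‖x - y‖ := by
  rw [← sq_eq_sq₀ (norm_nonneg _) (norm_nonneg _), norm_sub_sq_real, norm_sub_sq_real, hxy]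
  simp only [← real_inner_self_eq_norm_sq, hx, hy]

theorem StressFree.hasSpanningEquivalent [FiniteDimensional ℝ E] {n : ℕ}
    (hcard : Module.finrank ℝ E + 1 = n) {G : SimpleGraph (Fin n)} {p : Fin n → V}
    (hp : StressFree G fun i => ((1 : ℝ), p i)) : HasSpanningEquivalent E G p := by
  rw [← stressFree_map_iff (WithLp.linearEquiv 2 ℝ (ℝ × V)).symm.injective] at hp
  obtain ⟨v, hv, hvp⟩ := hp.exists_linearIndependent_inner_eq
  obtain ⟨q, hqv, hspan⟩ := exists_norm_sub_eq_affineSpan_eq_top (E := E)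
    (by rwa [Fintype.card_fin]) (hv.affineIndependent ℝ)
  refine ⟨q, fun i j hij => ?_, hspan⟩
  rw [hqv, norm_sub_eq_of_inner_eq (hvp i i (.inl rfl)) (hvp j j (.inl rfl)) (hvp i j (.inr hij))]
  simp [← WithLp.toLp_sub]

theorem hasSpanningEquivalent_iff_stressFree [FiniteDimensional ℝ E] {n : ℕ}
    (hcard : Module.finrank ℝ E + 1 = n) {G : SimpleGraph (Fin n)} {p : Fin n → V} :
    HasSpanningEquivalent E G p ↔ StressFree G fun i => ((1 : ℝ), p i) :=
  ⟨fun h => h.stressFree (by rwa [Fintype.card_fin]), fun h => h.hasSpanningEquivalent hcard⟩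

end Framework

section AlmostEverywhere

variable {ι E V : Type*}

theorem ae_det_ne_zero [Fintype ι] [DecidableEq ι] :
    ∀ᵐ X : ι → ι → ℝ, (of X).det ≠ 0 := by
  -- Each line `Y + ℝ • 1` contains only finitely many singular matrices.
  refine ae_mem_of_ae_add_linearMap_mem
    (LinearMap.toSpanSingleton ℝ (ι → ι → ℝ) (1 : Matrix ι ι ℝ)) volume volume
    (s := {X | (of X).det ≠ 0}) ?_ fun Y => ?_
  · have hdet : Continuous fun X : ι → ι → ℝ => (of X).det :=
      Continuous.matrix_det continuous_id
    exact (isOpen_ne.preimage hdet).measurableSet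
  · have hfinite : (spectrum ℝ (-of Y)).Finite := finite_real_spectrum
    filter_upwards [hfinite.countable.ae_notMem volume] with t ht
    rw [spectrum.notMem_iff, isUnit_iff_isUnit_det, Algebra.algebraMap_eq_smul_one,
      sub_neg_eq_add, add_comm] at ht
    exact ht.ne_zero

theorem ae_linearIndependent [Fintype ι] : ∀ᵐ X : ι → ι → ℝ, LinearIndependent ℝ X := by
  classical
  filter_upwards [ae_det_ne_zero] with X hX
  exact linearIndependent_rows_iff_isUnit.2 ((isUnit_iff_isUnit_det _).2 hX.isUnit)

theorem ae_forall_ne_zero [Fintype ι] : ∀ᵐ a : ι → ℝ, ∀ i, a i ≠ 0 :=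
  ae_all_iff.2 fun i =>
    (Measure.quasiMeasurePreserving_eval (fun _ : ι => (volume : Measure ℝ)) i).ae
      (Measure.ae_ne volume 0)

section LinearEquiv

variable {F F' : Type*} [NormedAddCommGroup F] [NormedSpace ℝ F] [FiniteDimensional ℝ F]
  [MeasurableSpace F] [BorelSpace F] [NormedAddCommGroup F'] [NormedSpace ℝ F']
  [MeasurableSpace F'] [BorelSpace F']
  (μ : Measure F) [μ.IsAddHaarMeasure] (ν : Measure F') [ν.IsAddHaarMeasure]

theorem quasiMeasurePreserving_linearEquiv (f : F ≃ₗ[ℝ] F') :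
    Measure.QuasiMeasurePreserving f μ ν := by
  have := f.finiteDimensional
  have := f.toContinuousLinearEquiv.isAddHaarMeasure_map μ
  exact ⟨f.toContinuousLinearEquiv.continuous.measurable,
    Measure.absolutelyContinuous_isAddHaarMeasure (μ.map f.toContinuousLinearEquiv) ν⟩

theorem ae_comp_linearEquiv_iff (f : F ≃ₗ[ℝ] F') {P : F' → Prop} :
    (∀ᵐ x ∂μ, P (f x)) ↔ ∀ᵐ y ∂ν, P y := by
  have := f.finiteDimensional
  exact ⟨fun h => by simpa using (quasiMeasurePreserving_linearEquiv ν μ f.symm).ae h,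
    (quasiMeasurePreserving_linearEquiv μ ν f).ae⟩

end LinearEquiv

variable [Fintype ι] [NormedAddCommGroup E] [NormedSpace ℝ E] [FiniteDimensional ℝ E]
  [MeasureSpace E] [BorelSpace E] [(volume : Measure E).IsAddHaarMeasure]
  [NormedAddCommGroup V] [NormedSpace ℝ V] [FiniteDimensional ℝ V]
  [MeasureSpace V] [BorelSpace V] [(volume : Measure V).IsAddHaarMeasure]

theorem quasiMeasurePreserving_pi_smul {a : ι → ℝ} (ha : ∀ i, a i ≠ 0) :
    Measure.QuasiMeasurePreserving (fun (p : ι → E) i => a i • p i) :=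
  quasiMeasurePreserving_linearEquiv volume volume
    (LinearEquiv.piCongrRight fun i => LinearEquiv.smulOfNeZero ℝ E (a i) (ha i))

theorem ae_prod_iff_ae_one_of_forall_smul_iff {P : (ι → ℝ × E) → Prop}
    (hP : ∀ (a : ι → ℝ) (y : ι → ℝ × E), (∀ i, a i ≠ 0) → (P (fun i => a i • y i) ↔ P y)) :
    (∀ᵐ z : (ι → ℝ) × (ι → E), P fun i => (z.1 i, z.2 i)) ↔
      ∀ᵐ p : ι → E, P fun i => (1, p i) := by
  constructor <;> intro h
  · obtain ⟨a, hPa, ha⟩ := ((Measure.ae_ae_of_ae_prod h).and ae_forall_ne_zero).exists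
    filter_upwards [(quasiMeasurePreserving_pi_smul ha).ae hPa] with p hp
    rw [← hP a _ ha]
    simpa using hp
  · have hdiv : Measure.QuasiMeasurePreserving
        fun (z : (ι → ℝ) × (ι → E)) i => (z.1 i)⁻¹ • z.2 i := by
      refine QuasiMeasurePreserving.prod_of_right (by fun_prop) ?_
      filter_upwards [ae_forall_ne_zero] with a ha
      exact quasiMeasurePreserving_pi_smul fun i => inv_ne_zero (ha i)
    filter_upwards [hdiv.ae h, Measure.quasiMeasurePreserving_fst.ae ae_forall_ne_zero]
      with z hz hz₀
    simpa [hz₀] using (hP z.1 _ hz₀).2 hz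

theorem ae_pi_iff_ae_prod_of_linearEquiv (e : (ℝ × E) ≃ₗ[ℝ] V) {P : (ι → V) → Prop} :
    (∀ᵐ x : ι → V, P x) ↔ ∀ᵐ z : (ι → ℝ) × (ι → E), P fun i => e (z.1 i, z.2 i) := by
  let f : ((ι → ℝ) × (ι → E)) ≃ₗ[ℝ] ι → V :=
    ((Equiv.arrowProdEquivProdArrow ι (fun _ => ℝ) fun _ => E).symm.toLinearEquiv
      ⟨fun _ _ => rfl, fun _ _ => rfl⟩).trans (.piCongrRight fun _ => e)
  have := Measure.prod.instIsAddHaarMeasure (volume : Measure (ι → ℝ)) (volume : Measure (ι → E))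
  exact (ae_comp_linearEquiv_iff (volume.prod volume) volume f).symm

theorem ae_stressFree_iff_ae_stressFree_one
    (hfinrank : Module.finrank ℝ V = Module.finrank ℝ E + 1) (G : SimpleGraph ι) :
    (∀ᵐ x : ι → V, StressFree G x) ↔ ∀ᵐ p : ι → E, StressFree G fun i => ((1 : ℝ), p i) := by
  let e : (ℝ × E) ≃ₗ[ℝ] V := .ofFinrankEq _ _ (by simp [hfinrank, add_comm])
  rw [ae_pi_iff_ae_prod_of_linearEquiv e]
  have he (z : (ι → ℝ) × (ι → E)) : StressFree G (fun i => e (z.1 i, z.2 i)) ↔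
      StressFree G fun i => (z.1 i, z.2 i) := stressFree_map_iff (f := e.toLinearMap) e.injective
  simp only [he]
  exact ae_prod_iff_ae_one_of_forall_smul_iff fun a y ha => stressFree_smul_iff ha

end AlmostEverywhere

theorem ae_exists_min_iff_ae_hasSpanningEquivalent {n d : ℕ} (hn : 1 ≤ n) (hd : 0 < d)
    (G : SimpleGraph (Fin n)) :
    (∀ᵐ X : Fin n → Fin d → ℝ, ∃ K ∈ graphModel n G, ∀ K' ∈ graphModel n G,
      mlObjective (of X * (of X)ᵀ) K ≤ mlObjective (of X * (of X)ᵀ) K') ↔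
      ∀ᵐ p : Fin n → EuclideanSpace ℝ (Fin (d - 1)),
        HasSpanningEquivalent (EuclideanSpace ℝ (Fin (n - 1))) G p := by
  have hcard : Module.finrank ℝ (EuclideanSpace ℝ (Fin (n - 1))) + 1 = n := by
    rw [finrank_euclideanSpace_fin, Nat.sub_add_cancel hn]
  simp only [exists_min_graphModel_iff_stressFree, hasSpanningEquivalent_iff_stressFree hcard]
  refine ae_stressFree_iff_ae_stressFree_one ?_ G
  rw [finrank_euclideanSpace_fin, Module.finrank_fin_fun, Nat.sub_add_cancel hd]

/-- For a graph `G` on `n ≥ 1` vertices, `MLT(G)` is the minimum positive integer `d` such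
that almost every `(d−1)`-dimensional framework on `G` is equivalent to an
`(n−1)`-dimensional framework whose points affinely span `ℝ^{n−1}`. The conclusion is
`IsLeast`, so it includes that such a `d` exists. -/
theorem mlt_eq_min_equivalent_spanning (n : ℕ) (hn : 1 ≤ n) (G : SimpleGraph (Fin n)) :
    IsLeast {d : ℕ | 0 < d ∧
        ∀ᵐ p : Fin n → EuclideanSpace ℝ (Fin (d - 1)) ∂volume,
          ∃ q : Fin n → EuclideanSpace ℝ (Fin (n - 1)),
            (∀ i j, G.Adj i j → ‖q i - q j‖ = ‖p i - p j‖) ∧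
            affineSpan ℝ (Set.range q) = ⊤}
      (mlt n (graphModel n G)) := by
  have hset : {d : ℕ | 0 < d ∧
        ∀ᵐ p : Fin n → EuclideanSpace ℝ (Fin (d - 1)) ∂volume,
          HasSpanningEquivalent (EuclideanSpace ℝ (Fin (n - 1))) G p} =
      {d : ℕ | 0 < d ∧ ∀ᵐ X : Fin n → Fin d → ℝ, ∃ K ∈ graphModel n G, ∀ K' ∈ graphModel n G,
        mlObjective (of X * (of X)ᵀ) K ≤ mlObjective (of X * (of X)ᵀ) K'} := by
    ext d
    exact and_congr_right fun hd => (ae_exists_min_iff_ae_hasSpanningEquivalent hn hd G).symm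
  have hne : ∀ᵐ X : Fin n → Fin n → ℝ, ∃ K ∈ graphModel n G, ∀ K' ∈ graphModel n G,
      mlObjective (of X * (of X)ᵀ) K ≤ mlObjective (of X * (of X)ᵀ) K' := by
    filter_upwards [ae_linearIndependent] with X hX
    exact (exists_min_graphModel_iff_stressFree X).2 (stressFree_of_linearIndependent hX)
  exact hset ▸ isLeast_csInf ⟨n, hn, hne⟩
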